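/- For every φ∈X_{fJ} there is an open neighbourhood N_φ ⊂ U^J∩X_f of φ in X_f such that R^J defines a diffeomorphism from N_φ onto the set R^J(N_φ), which is an open neighbourhood of R^J(φ) in X_0. -/

import Mathlib

open Set

noncomputable section

/-- The compact interval `[-r,0]`. -/
abbrev Icc0 (r : ℝ) : Set ℝ := Set.Icc (-r) 0

/-- Extension of a continuous map on `[-r,0]` to `ℝ`, by the value `0` outside. -/
def extFun {r : ℝ} {E : Type*} [TopologicalSpace E] [Zero E] (φ : C(Icc0 r, E)) : ℝ → E :=
  fun t => if h : t ∈ Icc0 r then φ ⟨t, h⟩ else 0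

section extlemmas

variable {r : ℝ} {E : Type*} [NormedAddCommGroup E] [NormedSpace ℝ E]

lemma extFun_add (φ ψ : C(Icc0 r, E)) : extFun (φ + ψ) = extFun φ + extFun ψ := by
  funext t; by_cases h : t ∈ Icc0 r <;> simp [extFun, h]

lemma extFun_zero : extFun (0 : C(Icc0 r, E)) = 0 := by
  funext t; by_cases h : t ∈ Icc0 r <;> simp [extFun, h]

lemma extFun_smul (c : ℝ) (φ : C(Icc0 r, E)) : extFun (c • φ) = c • extFun φ := by
  funext t; by_cases h : t ∈ Icc0 r <;> simp [extFun, h]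

end extlemmas

/-- The space `C¹([-r,0],E)`, realized as the closed subspace of pairs `(φ, φ')` in
`C([-r,0],E) × C([-r,0],E)` such that `φ` is differentiable on `[-r,0]` with derivative `φ'`. -/
def C1sub (r : ℝ) (E : Type*) [NormedAddCommGroup E] [NormedSpace ℝ E] :
    Submodule ℝ (C(Icc0 r, E) × C(Icc0 r, E)) where
  carrier := {p | ∀ t ∈ Icc0 r, HasDerivWithinAt (extFun p.1) (extFun p.2 t) (Icc0 r) t}
  add_mem' := by
    intro p q hp hq t ht
    have h := (hp t ht).add (hq t ht)
    have e1 : extFun (p + q).1 = fun s => extFun p.1 s + extFun q.1 s := by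
      simp [Prod.fst_add, extFun_add]; rfl
    have e2 : extFun (p + q).2 t = extFun p.2 t + extFun q.2 t := by
      simp [Prod.snd_add, extFun_add]
    rw [e1, e2]; exact h
  zero_mem' := by
    intro t ht
    have e1 : extFun (0 : C(Icc0 r, E) × C(Icc0 r, E)).1 = fun _ : ℝ => (0 : E) := by
      simp [extFun_zero]; rfl
    have e2 : extFun (0 : C(Icc0 r, E) × C(Icc0 r, E)).2 t = 0 := by
      simp [extFun_zero]
    rw [e1, e2]; exact hasDerivWithinAt_const _ _ _
  smul_mem' := by
    intro c p hp t ht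
    have h := (hp t ht).const_smul c
    have e1 : extFun (c • p).1 = fun s => c • extFun p.1 s := by
      simp [Prod.smul_fst, extFun_smul]; rfl
    have e2 : extFun (c • p).2 t = c • extFun p.2 t := by
      simp [Prod.smul_snd, extFun_smul]
    rw [e1, e2]; exact h

/-- The Banach space `C¹([-r,0],E)`. -/
abbrev C1 (r : ℝ) (E : Type*) [NormedAddCommGroup E] [NormedSpace ℝ E] := ↥(C1sub r E)

section C1ops

variable {r : ℝ} {E : Type*} [NormedAddCommGroup E] [NormedSpace ℝ E]

/-- Evaluation `φ(t)` of `φ ∈ C¹([-r,0],E)` (extended by `0` outside `[-r,0]`). -/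
def evC (φ : C1 r E) (t : ℝ) : E := extFun φ.1.1 t

/-- Evaluation `φ'(t)` of the derivative of `φ ∈ C¹([-r,0],E)`. -/
def dvC (φ : C1 r E) (t : ℝ) : E := extFun φ.1.2 t

end C1ops

/-- The continuous linear map `ℝ → (Fin n → ℝ)` sending `x` to the vector `x·e_ν`. -/
def sCLM (n : ℕ) (ν : Fin n) : ℝ →L[ℝ] (Fin n → ℝ) :=
  ContinuousLinearMap.pi (fun j => if j = ν then ContinuousLinearMap.id ℝ ℝ else 0)

/-- `ψ · e_ν` for a continuous map `ψ`. -/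
def CMsingle {r : ℝ} {n : ℕ} (ν : Fin n) (φ : C(Icc0 r, ℝ)) : C(Icc0 r, Fin n → ℝ) :=
  ⟨fun t => sCLM n ν (φ t), (sCLM n ν).continuous.comp φ.continuous⟩

lemma extFun_CMsingle {r : ℝ} {n : ℕ} (ν : Fin n) (φ : C(Icc0 r, ℝ)) (t : ℝ) :
    extFun (CMsingle ν φ) t = sCLM n ν (extFun φ t) := by
  by_cases h : t ∈ Icc0 r <;> simp [extFun, CMsingle, h]

/-- `ψ · e_ν ∈ C¹([-r,0],ℝⁿ)` for a scalar function `ψ ∈ C¹([-r,0],ℝ)`. -/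
def singleC1 {r : ℝ} {n : ℕ} (ν : Fin n) (φ : C1 r ℝ) : C1 r (Fin n → ℝ) :=
  ⟨(CMsingle ν φ.1.1, CMsingle ν φ.1.2), by
    intro t ht
    have h := ((sCLM n ν).hasFDerivAt).comp_hasDerivWithinAt t (φ.2 t ht)
    have e1 : extFun (CMsingle ν φ.1.1) = (sCLM n ν) ∘ (extFun φ.1.1) := by
      funext s; exact extFun_CMsingle ν φ.1.1 s
    rw [show (CMsingle ν φ.1.1, CMsingle ν φ.1.2).1 = CMsingle ν φ.1.1 from rfl,
      show (CMsingle ν φ.1.1, CMsingle ν φ.1.2).2 = CMsingle ν φ.1.2 from rfl,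
      e1, extFun_CMsingle]
    exact h⟩

/-- The linear map `ℝⁿ → C¹([-r,0],ℝⁿ)`, `x ↦ Σ_ν x_ν ψ_ν · e_ν` (the map `Y·x`). -/
def Ymap {r : ℝ} {n : ℕ} (ψ : Fin n → C1 r ℝ) : (Fin n → ℝ) →ₗ[ℝ] C1 r (Fin n → ℝ) where
  toFun x := ∑ ν, x ν • singleC1 ν (ψ ν)
  map_add' x y := by simp [add_smul, Finset.sum_add_distrib]
  map_smul' c x := by simp [smul_smul, Finset.smul_sum]

/-- The closed subspace `X₀ = {φ ∈ C¹ : φ'(0) = 0}`. -/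
def X0sub (r : ℝ) (n : ℕ) : Submodule ℝ (C1 r (Fin n → ℝ)) where
  carrier := {φ | dvC φ 0 = 0}
  add_mem' := by
    intro φ ψ hφ hψ
    have : dvC (φ + ψ) 0 = dvC φ 0 + dvC ψ 0 := by
      simp [dvC, extFun_add]
    rw [Set.mem_setOf_eq] at *
    rw [this, hφ, hψ, add_zero]
  zero_mem' := by
    show dvC (0 : C1 r (Fin n → ℝ)) 0 = 0
    simp [dvC, extFun_zero]
  smul_mem' := by
    intro c φ hφ
    have : dvC (c • φ) 0 = c • dvC φ 0 := by simp [dvC, extFun_smul]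
    rw [Set.mem_setOf_eq] at *
    rw [this, hφ, smul_zero]

/-- The projection-like map `R φ = φ − Y·φ'(0)`. -/
def RKmap {r : ℝ} {n : ℕ} (ψ : Fin n → C1 r ℝ) (φ : C1 r (Fin n → ℝ)) : C1 r (Fin n → ℝ) :=
  φ - Ymap ψ (dvC φ 0)

section diffeos

variable {E : Type*} [NormedAddCommGroup E] [NormedSpace ℝ E]
variable {E' : Type*} [NormedAddCommGroup E'] [NormedSpace ℝ E']

/-- `f` defines a `C¹`-diffeomorphism from `s` onto `t`: `f` is continuously differentiable
on `s`, injective on `s`, maps `s` onto `t`, and has a continuously differentiable inverse. -/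
def IsC1DiffeoOn (f : E → E') (s : Set E) (t : Set E') : Prop :=
  ContDiffOn ℝ 1 f s ∧ Set.InjOn f s ∧ f '' s = t ∧
    ∃ g : E' → E, ContDiffOn ℝ 1 g t ∧ Set.InvOn g f s t

/-- The tangent cone of `X ⊆ E` at `x`: all velocities `c'(0)` of continuously differentiable
curves in `X` through `x`. -/
def tangentSet (X : Set E) (x : E) : Set E :=
  {v | ∃ (c : ℝ → E) (ε : ℝ), 0 < ε ∧ ContDiffOn ℝ 1 c (Set.Ioo (-ε) ε) ∧
      (∀ s ∈ Set.Ioo (-ε) ε, c s ∈ X) ∧ c 0 = x ∧ HasDerivWithinAt c v (Set.Ioo (-ε) ε) 0}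

/-- `X` is a continuously differentiable submanifold of codimension `m` of `E`. -/
def IsC1SubmanifoldCodim (X : Set E) (m : ℕ) : Prop :=
  ∀ x ∈ X, ∃ (O : Set E) (Φ : E → E) (H Q : Submodule ℝ E),
    IsOpen O ∧ x ∈ O ∧ IsClosed (H : Set E) ∧ IsCompl H Q ∧ Module.finrank ℝ Q = m ∧
    IsOpen (Φ '' O) ∧ IsC1DiffeoOn Φ O (Φ '' O) ∧ Φ '' (X ∩ O) = (H : Set E) ∩ (Φ '' O)

/-- `X` is a continuously differentiable submanifold of `E`. -/
def IsC1Submanifold (X : Set E) : Prop :=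
  ∀ x ∈ X, ∃ (O : Set E) (Φ : E → E) (H : Submodule ℝ E),
    IsOpen O ∧ x ∈ O ∧ IsClosed (H : Set E) ∧
    IsOpen (Φ '' O) ∧ IsC1DiffeoOn Φ O (Φ '' O) ∧ Φ '' (X ∩ O) = (H : Set E) ∩ (Φ '' O)

/-- `A` is an almost graph over `H`. -/
def IsAlmostGraphOver (A : Set E) (H : Set E) : Prop :=
  ∃ (dm : Set E) (α : E → E), dm ⊆ H ∧ ContDiffOn ℝ 1 α dm ∧
    (∀ ζ ∈ dm ∩ A, α ζ = 0) ∧ (∀ ζ ∈ dm \ A, α ζ ∉ H) ∧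
    IsC1DiffeoOn (fun ζ => ζ + α ζ) dm A

end diffeos

/-- The data of the delay differential system
`x'(t) = g(x(t-d_1(Lx_t)),…,x(t-d_kk(Lx_t)))`. -/
structure Setting (r : ℝ) (n kk : ℕ) (F : Type*) [NormedAddCommGroup F] [NormedSpace ℝ F] where
  /-- The continuous linear map `L : C([-r,0],ℝⁿ) → F`. -/
  L : C(Icc0 r, Fin n → ℝ) →L[ℝ] F
  /-- The open set `W ⊆ F`. -/
  W : Set F
  Wopen : IsOpen W
  /-- The delay functions `d_k : W → [0,r]`. -/
  d : Fin kk → F → ℝ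
  d_smooth : ∀ k, ContDiffOn ℝ 1 (d k) W
  d_mem : ∀ k, ∀ w ∈ W, d k w ∈ Set.Icc (0:ℝ) r
  /-- The open set `V ⊆ (ℝⁿ)^kk`. -/
  V : Set (Fin kk → Fin n → ℝ)
  Vopen : IsOpen V
  /-- The right hand side function `g : V → ℝⁿ`. -/
  g : (Fin kk → Fin n → ℝ) → Fin n → ℝ
  g_smooth : ContDiffOn ℝ 1 g V

namespace Setting

variable {r : ℝ} {n kk : ℕ} {F : Type*} [NormedAddCommGroup F] [NormedSpace ℝ F]
variable (S : Setting r n kk F)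

/-- `L` applied to (the `C⁰`-part of) `φ ∈ C¹`. -/
def Lof (φ : C1 r (Fin n → ℝ)) : F := S.L φ.1.1

/-- `φ̂ = (φ(-d_1(Lφ)),…,φ(-d_kk(Lφ)))`. -/
def hat (φ : C1 r (Fin n → ℝ)) : Fin kk → Fin n → ℝ := fun k => evC φ (-(S.d k (S.Lof φ)))

/-- The domain `U = {φ ∈ C¹ : Lφ ∈ W, φ̂ ∈ V}`. -/
def U : Set (C1 r (Fin n → ℝ)) := {φ | S.Lof φ ∈ S.W ∧ S.hat φ ∈ S.V}

/-- The right hand side `f(φ) = g(φ̂)`. -/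
def fmap (φ : C1 r (Fin n → ℝ)) : Fin n → ℝ := S.g (S.hat φ)

/-- The solution manifold `X_f = {φ ∈ U : φ'(0) = f(φ)}`. -/
def Xf : Set (C1 r (Fin n → ℝ)) := {φ | φ ∈ S.U ∧ dvC φ 0 = S.fmap φ}

/-- `W_J = {w ∈ W : d_j(w)=0 for j∈J, d_k(w)>0 for k∉J}`. -/
def WJ (J : Finset (Fin kk)) : Set F :=
  {w | w ∈ S.W ∧ (∀ j ∈ J, S.d j w = 0) ∧ ∀ k ∉ J, 0 < S.d k w}

/-- `W^J = {w ∈ W : d_k(w)>0 for k∉J}`. -/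
def WupJ (J : Finset (Fin kk)) : Set F :=
  {w | w ∈ S.W ∧ ∀ k ∉ J, 0 < S.d k w}

/-- `U_J = U ∩ L⁻¹(W_J)`. -/
def UJ (J : Finset (Fin kk)) : Set (C1 r (Fin n → ℝ)) := {φ | φ ∈ S.U ∧ S.Lof φ ∈ S.WJ J}

/-- `U^J = U ∩ L⁻¹(W^J)`. -/
def UupJ (J : Finset (Fin kk)) : Set (C1 r (Fin n → ℝ)) := {φ | φ ∈ S.U ∧ S.Lof φ ∈ S.WupJ J}

/-- `X_{fJ} = X_f ∩ U_J`. -/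
def XfJ (J : Finset (Fin kk)) : Set (C1 r (Fin n → ℝ)) := S.Xf ∩ S.UJ J

/-- Hypothesis (b): `g` is bounded. -/
def HypB : Prop := ∃ M, ∀ v ∈ S.V, ‖S.g v‖ ≤ M

/-- Hypothesis (d1b): `d₁ = 0` on `W` and `g` is bounded on subsets of `V` with bounded
first component. -/
def HypD1B (hk : 0 < kk) : Prop :=
  (∀ w ∈ S.W, S.d ⟨0, hk⟩ w = 0) ∧
  ∀ B : Set (Fin n → ℝ), Bornology.IsBounded B →
    Bornology.IsBounded (S.g '' {v | v ∈ S.V ∧ v ⟨0, hk⟩ ∈ B})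

/-- The partial derivative `∂_{(k-1)n+ν} g_μ (φ̂)`. -/
def dgCoeff (φ : C1 r (Fin n → ℝ)) (k : Fin kk) (ν : Fin n) (μ : Fin n) : ℝ :=
  fderivWithin ℝ S.g S.V (S.hat φ) (Pi.single k (Pi.single ν 1)) μ

/-- The right hand side of the formula for `Df_μ(φ)χ`. -/
def dFormula (φ χ : C1 r (Fin n → ℝ)) (μ : Fin n) : ℝ :=
  ∑ k, ∑ ν, S.dgCoeff φ k ν μ *
    (evC χ (-(S.d k (S.Lof φ))) ν -
      dvC φ (-(S.d k (S.Lof φ))) ν * fderivWithin ℝ (S.d k) S.W (S.Lof φ) (S.Lof χ))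

/-- The map `R^J(φ) = φ − Y_J(Lφ)·φ'(0)` of Section 4 of the paper. -/
def RJmap (y : Fin n → F → C1 r ℝ) (φ : C1 r (Fin n → ℝ)) : C1 r (Fin n → ℝ) :=
  φ - Ymap (fun ν => y ν (S.Lof φ)) (dvC φ 0)

end Setting


variable {r : ℝ} {n kk : ℕ} {F : Type*} [NormedAddCommGroup F] [NormedSpace ℝ F]
  [FiniteDimensional ℝ F]

/-!
On `X_f` the map `R^J` agrees with `A(φ) = φ - Y_J(Lφ) f(φ)`, which is defined near `φ ∈ X_{fJ}` in
the whole space. Since `(Y_J(w) x)'(0) = x`, one has `(A φ)'(0) = φ'(0) - f(φ)`, so that `X_f` is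
locally the preimage of `X₀` under `A`, and it suffices that `A` is a local diffeomorphism at `φ`.
Its derivative there is `1 - N` with `N = Y_J(Lφ) Df(φ) + (DY_J(Lφ) L) f(φ)`. The range of `Y_J(Lφ)`
is annihilated by `L`, because `L Y_J = 0`, and by `Df(φ)`: the functions in this range vanish at
every `-d_k(Lφ)`, whence `f` is constant along them. The range of the second summand of `N` is
annihilated by `L` as well. Therefore `N³ = 0`, and the inverse function theorem applies.

That `f` is of class `C¹` rests on the evaluation `(φ, t) ↦ φ(t)` being `C¹` on
`C¹([-r,0],ℝⁿ) × [-r,0]`, a consequence of the mean value inequality.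
-/

open Filter Topology NNReal

section InverseFunction

variable {E E' : Type*} [NormedAddCommGroup E] [NormedSpace ℝ E]
  [NormedAddCommGroup E'] [NormedSpace ℝ E']

lemma IsC1DiffeoOn.restrict {A R : E → E'} {s O : Set E} {T : Set E'} (hA : IsC1DiffeoOn A O T)
    (hs : s ⊆ O) (hRA : EqOn R A s) : IsC1DiffeoOn R s (R '' s) := by
  obtain ⟨hAdiff, -, rfl, g, hg, hgA, -⟩ := hA
  have hgR : LeftInvOn g R s := fun x hx => (congrArg g (hRA hx)).trans (hgA (hs hx))
  refine ⟨(hAdiff.mono hs).congr hRA, hgR.injOn, rfl, g, ?_, hgR, hgR.rightInvOn_image⟩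
  rw [hRA.image_eq]
  exact hg.mono (image_mono hs)

lemma exists_isC1DiffeoOn_of_hasFDerivAt_equiv [CompleteSpace E] {A : E → E'} {A' : E ≃L[ℝ] E'}
    {a : E} (hA : ContDiffAt ℝ 1 A a) (hA' : HasFDerivAt A (A' : E →L[ℝ] E') a) {U : Set E}
    (hU : U ∈ 𝓝 a) :
    ∃ O ⊆ U, IsOpen O ∧ a ∈ O ∧ IsOpen (A '' O) ∧ IsC1DiffeoOn A O (A '' O) := by
  let e := hA.toOpenPartialHomeomorph A hA' one_ne_zero
  have ha : a ∈ e.source := hA.mem_toOpenPartialHomeomorph_source hA' one_ne_zero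
  have hsymm : ∀ᶠ x in 𝓝 a, ContDiffAt ℝ 1 e.symm (A x) :=
    hA.continuousAt.eventually ((hA.to_localInverse hA' one_ne_zero).eventually (by simp))
  obtain ⟨O, hO, hOopen, haO⟩ := eventually_nhds_iff.1
    (((hA.eventually (by simp)).and hsymm).and
      ((eventually_mem_set.2 hU).and (e.open_source.eventually_mem ha)))
  have hOe : O ⊆ e.source := fun x hx => (hO x hx).2.2
  have hinv : LeftInvOn e.symm A O := fun x hx => e.left_inv (hOe hx)
  refine ⟨O, fun x hx => (hO x hx).2.1, hOopen, haO, e.isOpen_image_of_subset_source hOopen hOe,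
    fun x hx => (hO x hx).1.1.contDiffWithinAt, hinv.injOn, rfl, e.symm, ?_, hinv,
    hinv.rightInvOn_image⟩
  rintro _ ⟨x, hx, rfl⟩
  exact (hO x hx).1.2.contDiffWithinAt

end InverseFunction

section VerticalShift

variable {E P G : Type*} [NormedAddCommGroup E] [NormedSpace ℝ E]
  [NormedAddCommGroup P] [NormedSpace ℝ P] [NormedAddCommGroup G] [NormedSpace ℝ G]

lemma isNilpotent_comp_add_comp {a : P →L[ℝ] E} {p : E →L[ℝ] P} {b : G →L[ℝ] E} {Λ : E →L[ℝ] G}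
    (hpa : p ∘L a = 0) (hΛa : Λ ∘L a = 0) (hΛb : Λ ∘L b = 0) :
    IsNilpotent (a ∘L p + b ∘L Λ) := by
  have hpa' (x) : p (a x) = 0 := congr($hpa x)
  have hΛa' (x) : Λ (a x) = 0 := congr($hΛa x)
  have hΛb' (x) : Λ (b x) = 0 := congr($hΛb x)
  refine ⟨3, ContinuousLinearMap.ext fun x => ?_⟩
  simp [pow_succ, hpa', hΛa', hΛb']

/-- The map `φ ↦ φ - Y(Λφ) h(φ)`. When every `Y w` takes values in `ker Λ`, it moves points only
inside the fibres of `Λ`. The map `R^J` is the case `h(φ) = φ'(0)`, and the case `h = f` straightens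
the solution manifold. -/
def verticalShift (Λ : E →L[ℝ] G) (Y : G → P →L[ℝ] E) (h : E → P) (φ : E) : E :=
  φ - Y (Λ φ) (h φ)

variable {Λ : E →L[ℝ] G} {Y : G → P →L[ℝ] E} {f : E → P} {D : E →L[ℝ] P} {φ : E}

lemma contDiffAt_verticalShift (hY : ContDiffAt ℝ 1 Y (Λ φ)) (hf : ContDiffAt ℝ 1 f φ) :
    ContDiffAt ℝ 1 (verticalShift Λ Y f) φ :=
  contDiffAt_id.sub ((hY.comp φ Λ.contDiff.contDiffAt).clm_apply hf)

lemma hasFDerivAt_verticalShift {Y' : G →L[ℝ] P →L[ℝ] E} {f' : E →L[ℝ] P}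
    (hY : HasFDerivAt Y Y' (Λ φ)) (hf : HasFDerivAt f f' φ) :
    HasFDerivAt (verticalShift Λ Y f) (1 - (Y (Λ φ) ∘L f' + Y'.flip (f φ) ∘L Λ)) φ :=
  (hasFDerivAt_id φ).sub ((hY.comp φ Λ.hasFDerivAt).clm_apply hf)

lemma comp_flip_eq_zero_of_hasFDerivAt {Y' : G →L[ℝ] P →L[ℝ] E} {w : G}
    (hY : HasFDerivAt Y Y' w) (hΛY : ∀ᶠ v in 𝓝 w, Λ ∘L Y v = 0) (x : P) :
    Λ ∘L Y'.flip x = 0 := by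
  have hderiv : HasFDerivAt (fun v => Λ (Y v x)) (Λ ∘L Y'.flip x) w :=
    (Λ ∘L ContinuousLinearMap.apply ℝ E x).hasFDerivAt.comp w hY
  exact hderiv.unique <| (hasFDerivAt_const (0 : G) w).congr_of_eventuallyEq <|
    hΛY.mono fun v hv => congr($hv x)

lemma comp_eq_zero_of_hasFDerivAt_of_forall_add {f' : E →L[ℝ] P} (hf : HasFDerivAt f f' φ)
    {a : G →L[ℝ] E} (hfa : ∀ x, f (φ + a x) = f φ) : f' ∘L a = 0 := by
  have hcomp : HasFDerivAt (fun x => f (φ + a x)) (f' ∘L a) 0 :=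
    HasFDerivAt.comp 0 (by simpa using hf) (a.hasFDerivAt.const_add φ)
  simp only [hfa] at hcomp
  exact hcomp.unique (hasFDerivAt_const _ _)

theorem exists_isC1DiffeoOn_verticalShift [CompleteSpace E] (hY : ContDiffAt ℝ 1 Y (Λ φ))
    (hΛY : ∀ᶠ v in 𝓝 (Λ φ), Λ ∘L Y v = 0) (hf : ContDiffAt ℝ 1 f φ)
    (hfY : ∀ x, f (φ + Y (Λ φ) x) = f φ) {U : Set E} (hU : U ∈ 𝓝 φ) :
    ∃ O ⊆ U, IsOpen O ∧ φ ∈ O ∧ IsOpen (verticalShift Λ Y f '' O) ∧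
      IsC1DiffeoOn (verticalShift Λ Y f) O (verticalShift Λ Y f '' O) := by
  have hY' := (hY.differentiableAt one_ne_zero).hasFDerivAt
  have hf' := (hf.differentiableAt one_ne_zero).hasFDerivAt
  have hnil : IsNilpotent (Y (Λ φ) ∘L fderiv ℝ f φ + (fderiv ℝ Y (Λ φ)).flip (f φ) ∘L Λ) :=
    isNilpotent_comp_add_comp (comp_eq_zero_of_hasFDerivAt_of_forall_add hf' hfY)
      hΛY.self_of_nhds (comp_flip_eq_zero_of_hasFDerivAt hY' hΛY (f φ))
  obtain ⟨u, hu⟩ := hnil.isUnit_one_sub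
  have hu' : HasFDerivAt (verticalShift Λ Y f) (u : E →L[ℝ] E) φ :=
    hu ▸ hasFDerivAt_verticalShift hY' hf'
  exact exists_isC1DiffeoOn_of_hasFDerivAt_equiv (A' := .ofUnit u)
    (contDiffAt_verticalShift hY hf) hu' hU

theorem exists_isC1DiffeoOn_verticalShift_equalizer [CompleteSpace E]
    (hY : ContDiffAt ℝ 1 Y (Λ φ)) (hΛY : ∀ᶠ v in 𝓝 (Λ φ), Λ ∘L Y v = 0)
    (hDY : ∀ᶠ v in 𝓝 (Λ φ), ∀ x, D (Y v x) = x) (hf : ContDiffAt ℝ 1 f φ)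
    (hfY : ∀ x, f (φ + Y (Λ φ) x) = f φ) {U : Set E} (hU : U ∈ 𝓝 φ) :
    ∃ O ⊆ U, IsOpen O ∧ φ ∈ O ∧
      (∃ O', IsOpen O' ∧
        verticalShift Λ Y D '' ({ψ | D ψ = f ψ} ∩ O) = (D.ker : Set E) ∩ O') ∧
      IsC1DiffeoOn (verticalShift Λ Y D) ({ψ | D ψ = f ψ} ∩ O)
        (verticalShift Λ Y D '' ({ψ | D ψ = f ψ} ∩ O)) := by
  obtain ⟨O, hO, hOopen, hφO, hO'open, hdiffeo⟩ := exists_isC1DiffeoOn_verticalShift hY hΛY hf hfY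
    (inter_mem hU (Λ.continuous.continuousAt.eventually hDY))
  have hker : {ψ | D ψ = f ψ} ∩ O = verticalShift Λ Y f ⁻¹' D.ker ∩ O := by
    ext ψ
    refine and_congr_left fun hψ => ?_
    have hD : D (verticalShift Λ Y f ψ) = D ψ - f ψ := by
      rw [verticalShift, map_sub, (hO hψ).2]
    simp [hD, sub_eq_zero]
  have heq : EqOn (verticalShift Λ Y D) (verticalShift Λ Y f) ({ψ | D ψ = f ψ} ∩ O) :=
    fun ψ hψ => by rw [verticalShift, verticalShift, hψ.1]
  refine ⟨O, fun ψ hψ => (hO hψ).1, hOopen, hφO, ⟨_, hO'open, ?_⟩,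
    hdiffeo.restrict inter_subset_right heq⟩
  rw [heq.image_eq, hker, image_preimage_inter]

end VerticalShift

section ParametricDerivative

variable {α X E : Type*} [NormedAddCommGroup X] [NormedSpace ℝ X]
  [NormedAddCommGroup E] [NormedSpace ℝ E] {s : Set ℝ} {t : ℝ}

lemma norm_image_sub_sub_smul_le {f f' : ℝ → E} (hs : Convex ℝ s)
    (hf : ∀ u ∈ s, HasDerivWithinAt f (f' u) s u) {v : E} {C : ℝ}
    (hC : ∀ u ∈ s, ‖f' u - v‖ ≤ C) {a b : ℝ} (ha : a ∈ s) (hb : b ∈ s) :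
    ‖f b - f a - (b - a) • v‖ ≤ C * ‖b - a‖ := by
  have hderiv (u) (hu : u ∈ s) : HasDerivWithinAt (fun u => f u - u • v) (f' u - v) s u := by
    simpa only [one_smul] using! (hf u hu).sub ((hasDerivWithinAt_id u s).smul_const v)
  convert hs.norm_image_sub_le_of_norm_hasDerivWithin_le hderiv hC ha hb using 2
  rw [sub_smul]
  abel

lemma isLittleO_image_sub_sub_smul {f f' : α → ℝ → E} {l : Filter α} (hs : Convex ℝ s)
    (ht : t ∈ s) (hf : ∀ x, ∀ u ∈ s, HasDerivWithinAt (f x) (f' x u) s u) {v : E}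
    (hf' : Tendsto (fun q : α × ℝ => f' q.1 q.2) (l ×ˢ 𝓝[s] t) (𝓝 v)) :
    (fun q : α × ℝ => f q.1 q.2 - f q.1 t - (q.2 - t) • v) =o[l ×ˢ 𝓝[s] t] fun q => q.2 - t := by
  refine Asymptotics.isLittleO_iff.2 fun ε hε => ?_
  have hconst : Tendsto (fun _ : α × ℝ => t) (l ×ˢ 𝓝[s] t) (𝓝[s] t) :=
    tendsto_const_pure.mono_right (pure_le_nhdsWithin ht)
  have hsnd : Tendsto Prod.snd (l ×ˢ 𝓝[s] t) (𝓝[s] t) := tendsto_snd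
  have hsegment : ∀ᶠ q : α × ℝ in l ×ˢ 𝓝[s] t, segment ℝ t q.2 ⊆ s :=
    (hsnd.eventually self_mem_nhdsWithin).mono fun q hq => hs.segment_subset ht hq
  have hfst : Tendsto (fun q : (α × ℝ) × ℝ => f' q.1.1 q.2) ((l ×ˢ 𝓝[s] t) ×ˢ 𝓝[s] t) (𝓝 v) :=
    hf'.comp (tendsto_fst.prodMap tendsto_id)
  have hnear : ∀ᶠ q : α × ℝ in l ×ˢ 𝓝[s] t, ∀ u ∈ segment ℝ t q.2, ‖f' q.1 u - v‖ ≤ ε :=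
    Eventually.segment_of_prod_nhdsWithin (r := fun q u => ‖f' q.1 u - v‖ ≤ ε)
      (hconst.mono_right nhdsWithin_le_nhds) (hsnd.mono_right nhdsWithin_le_nhds)
      ((hfst.sub_const v).norm.eventually_le_const (by simpa using hε)) hsegment
  filter_upwards [hnear, hsegment] with q hq hqs
  exact norm_image_sub_sub_smul_le (convex_segment t q.2)
    (fun u hu => (hf q.1 u (hqs hu)).mono hqs) hq (left_mem_segment ℝ t q.2)
    (right_mem_segment ℝ t q.2)

lemma continuousOn_of_hasDerivWithinAt_apply {e d : ℝ → X →L[ℝ] E} (hs : Convex ℝ s)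
    (he : ∀ x, ∀ u ∈ s, HasDerivWithinAt (fun u => e u x) (d u x) s u) {C : ℝ≥0}
    (hC : ∀ u ∈ s, ∀ x, ‖d u x‖ ≤ C * ‖x‖) : ContinuousOn e s := by
  refine (LipschitzOnWith.of_dist_le_mul (K := C) fun b hb a ha => ?_).continuousOn
  rw [dist_eq_norm, dist_eq_norm]
  refine ContinuousLinearMap.opNorm_le_bound _ (by positivity) fun x => ?_
  have hbound : ∀ u ∈ s, ‖d u x - 0‖ ≤ C * ‖x‖ := fun u hu => by
    rw [sub_zero]
    exact hC u hu x
  have hmean := norm_image_sub_sub_smul_le hs (he x) hbound ha hb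
  rw [smul_zero, sub_zero, mul_right_comm] at hmean
  exact hmean

lemma hasFDerivWithinAt_apply_of_hasDerivWithinAt {e d : ℝ → X →L[ℝ] E} (hs : Convex ℝ s)
    (he : ∀ x, ∀ u ∈ s, HasDerivWithinAt (fun u => e u x) (d u x) s u)
    (hd : ContinuousOn (fun q : X × ℝ => d q.2 q.1) (univ ×ˢ s)) (x : X) (ht : t ∈ s) :
    HasFDerivWithinAt (fun q : X × ℝ => e q.2 q.1)
      ((e t).coprod (.toSpanSingleton ℝ (d t x))) (univ ×ˢ s) (x, t) := by
  have hnhds : 𝓝[univ ×ˢ s] (x, t) = 𝓝 x ×ˢ 𝓝[s] t := by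
    rw [nhdsWithin_prod_eq, nhdsWithin_univ]
  have hdx := hd (x, t) ⟨mem_univ x, ht⟩
  rw [ContinuousWithinAt, hnhds] at hdx
  rw [hasFDerivWithinAt_iff_isLittleO, hnhds]
  have hlittle := (isLittleO_image_sub_sub_smul hs ht he hdx).trans_isBigO <|
    Asymptotics.isBigO_of_le _ fun q => norm_snd_le (q - (x, t))
  refine hlittle.congr_left fun q => ?_
  rw [ContinuousLinearMap.coprod_apply, ContinuousLinearMap.toSpanSingleton_apply, Prod.fst_sub,
    Prod.snd_sub, map_sub]
  abel

theorem contDiffOn_apply_of_hasDerivWithinAt {e d : ℝ → X →L[ℝ] E} (hs : Convex ℝ s)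
    (he : ∀ x, ∀ u ∈ s, HasDerivWithinAt (fun u => e u x) (d u x) s u)
    (hd : ContinuousOn (fun q : X × ℝ => d q.2 q.1) (univ ×ˢ s)) {C : ℝ≥0}
    (hC : ∀ u ∈ s, ∀ x, ‖d u x‖ ≤ C * ‖x‖) :
    ContDiffOn ℝ 1 (fun q : X × ℝ => e q.2 q.1) (univ ×ˢ s) := by
  have hderiv : ContinuousOn (fun q : X × ℝ => (e q.2).coprod (.toSpanSingleton ℝ (d q.2 q.1)))
      (univ ×ˢ s) :=
    (ContinuousLinearMap.coprodEquivL ℝ).continuous.comp_continuousOn <|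
      ((continuousOn_of_hasDerivWithinAt_apply hs he hC).comp continuousOn_snd
        fun _ hq => hq.2).prodMk
      (ContinuousLinearMap.toSpanSingletonCLE.continuous.comp_continuousOn hd)
  rw [← zero_add (1 : WithTop ℕ∞), contDiffOn_succ_iff_hasFDerivWithinAt (by simp)]
  refine fun q hq => ⟨univ ×ˢ s, ?_, by simp, _, fun q hq =>
    hasFDerivWithinAt_apply_of_hasDerivWithinAt hs he hd q.1 hq.2, contDiffOn_zero.2 hderiv⟩
  rw [insert_eq_of_mem hq]
  exact self_mem_nhdsWithin

end ParametricDerivative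

section Extension

variable {r : ℝ} {E : Type*} [NormedAddCommGroup E]

lemma norm_extFun_le (p : C(Icc0 r, E)) (t : ℝ) : ‖extFun p t‖ ≤ ‖p‖ := by
  by_cases ht : t ∈ Icc0 r
  · simpa only [extFun, ht, dite_true] using p.norm_coe_le_norm ⟨t, ht⟩
  · simp only [extFun, ht, dite_false, norm_zero, norm_nonneg]

lemma continuousOn_uncurry_extFun :
    ContinuousOn (fun q : C(Icc0 r, E) × ℝ => extFun q.1 q.2) (univ ×ˢ Icc0 r) := by
  rw [continuousOn_iff_continuous_domRestrict]
  have heval : Continuous fun q : ↥((univ : Set C(Icc0 r, E)) ×ˢ Icc0 r) =>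
      q.1.1 ⟨q.1.2, q.2.2⟩ := by fun_prop
  refine heval.congr fun q => ?_
  rw [domRestrict_apply, extFun, dif_pos q.2.2]

lemma continuous_extFun_apply {t : ℝ} (ht : t ∈ Icc0 r) :
    Continuous fun p : C(Icc0 r, E) => extFun p t :=
  continuousOn_uncurry_extFun.comp_continuous (f := fun p : C(Icc0 r, E) => (p, t))
    (by fun_prop) fun p => ⟨mem_univ p, ht⟩

end Extension

section EvaluationOnC1

variable {r : ℝ} {E : Type*} [NormedAddCommGroup E] [NormedSpace ℝ E]

lemma isClosed_C1sub : IsClosed (C1sub r E : Set (C(Icc0 r, E) × C(Icc0 r, E))) := by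
  refine isClosed_of_closure_subset fun p hp t ht => ?_
  let l : Filter (C1 r E) := comap Subtype.val (𝓝 p)
  have : l.NeBot := mem_closure_iff_comap_neBot.1 hp
  have hlim : Tendsto (fun φ : C1 r E => φ.1) l (𝓝 p) := tendsto_comap
  have heval {u : ℝ} (hu : u ∈ Icc0 r) :
      Tendsto (fun φ : C1 r E => evC φ u) l (𝓝 (extFun p.1 u)) :=
    ((continuous_extFun_apply hu).tendsto p.1).comp ((continuous_fst.tendsto p).comp hlim)
  have hdv : Tendsto (fun q : C1 r E × ℝ => dvC q.1 q.2) (l ×ˢ 𝓝[Icc0 r] t)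
      (𝓝 (extFun p.2 t)) := by
    have hcont := continuousOn_uncurry_extFun (p.2, t) ⟨mem_univ p.2, ht⟩
    rw [ContinuousWithinAt, nhdsWithin_prod_eq, nhdsWithin_univ] at hcont
    exact hcont.comp (((continuous_snd.tendsto p).comp hlim).prodMap tendsto_id)
  have hlittle := isLittleO_image_sub_sub_smul (convex_Icc (-r) 0) ht
    (fun φ : C1 r E => φ.2) hdv
  refine hasDerivWithinAt_iff_isLittleO.2 (Asymptotics.isLittleO_iff.2 fun ε hε => ?_)
  filter_upwards [(eventually_swap_iff.1 (Asymptotics.isLittleO_iff.1 hlittle hε)).curry,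
    self_mem_nhdsWithin] with s hs hsr
  exact le_of_tendsto (((heval hsr).sub (heval ht)).sub tendsto_const_nhds).norm hs

instance [CompleteSpace E] : CompleteSpace (C1 r E) := isClosed_C1sub.completeSpace_coe

/-- Evaluation of functions at `t` as a continuous linear map on `C¹([-r,0],E)`. -/
def evCLM (t : ℝ) : C1 r E →L[ℝ] E :=
  LinearMap.mkContinuous
    { toFun φ := evC φ t
      map_add' φ ψ := congrFun (extFun_add φ.1.1 ψ.1.1) t
      map_smul' c φ := congrFun (extFun_smul c φ.1.1) t }
    1 fun φ => (norm_extFun_le _ t).trans <| (norm_fst_le φ.1).trans_eq (one_mul _).symm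

/-- Evaluation of derivatives at `t` as a continuous linear map on `C¹([-r,0],E)`. -/
def dvCLM (t : ℝ) : C1 r E →L[ℝ] E :=
  LinearMap.mkContinuous
    { toFun φ := dvC φ t
      map_add' φ ψ := congrFun (extFun_add φ.1.2 ψ.1.2) t
      map_smul' c φ := congrFun (extFun_smul c φ.1.2) t }
    1 fun φ => (norm_extFun_le _ t).trans <| (norm_snd_le φ.1).trans_eq (one_mul _).symm

lemma continuousOn_uncurry_dvC :
    ContinuousOn (fun q : C1 r E × ℝ => dvC q.1 q.2) (univ ×ˢ Icc0 r) :=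
  continuousOn_uncurry_extFun.comp (f := fun q : C1 r E × ℝ => (q.1.1.2, q.2))
    (by fun_prop) fun q hq => ⟨mem_univ q.1.1.2, hq.2⟩

theorem contDiffOn_uncurry_evC :
    ContDiffOn ℝ 1 (fun q : C1 r E × ℝ => evC q.1 q.2) (univ ×ˢ Icc0 r) := by
  have hbound (u) (_ : u ∈ Icc0 r) (φ : C1 r E) : ‖dvC φ u‖ ≤ (1 : ℝ≥0) * ‖φ‖ := by
    rw [NNReal.coe_one, one_mul]
    exact (norm_extFun_le _ u).trans (norm_snd_le φ.1)
  exact contDiffOn_apply_of_hasDerivWithinAt (X := C1 r E) (e := evCLM) (d := dvCLM)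
    (convex_Icc (-r) 0) (fun φ => φ.2) continuousOn_uncurry_dvC hbound

end EvaluationOnC1

section Columns

variable {ι E G : Type*} [Fintype ι] [NormedAddCommGroup E] [NormedSpace ℝ E]
  [NormedAddCommGroup G] [NormedSpace ℝ G]

lemma contDiffAt_toContinuousLinearMap_linearCombination {b : G → ι → E} {w : G}
    (hb : ∀ i, ContDiffAt ℝ 1 (fun v => b v i) w) :
    ContDiffAt ℝ 1 (fun v => (Fintype.linearCombination ℝ (b v)).toContinuousLinearMap) w := by
  have hsum (v : G) : (Fintype.linearCombination ℝ (b v)).toContinuousLinearMap =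
      ∑ i, (ContinuousLinearMap.proj i : (ι → ℝ) →L[ℝ] ℝ).smulRight (b v i) := by
    ext1 x
    simp only [LinearMap.coe_toContinuousLinearMap', Fintype.linearCombination_apply,
      sum_apply, ContinuousLinearMap.smulRight_apply, ContinuousLinearMap.proj_apply]
  simp only [hsum]
  exact .sum fun i _ => contDiffAt_const.smulRight (hb i)

theorem exists_isC1DiffeoOn_sub_sum_smul_equalizer [DecidableEq ι] [CompleteSpace E]
    {Λ : E →L[ℝ] G}
    {b : G → ι → E} {f : E → ι → ℝ} {D : E →L[ℝ] ι → ℝ} {φ : E}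
    (hb : ∀ i, ContDiffAt ℝ 1 (fun w => b w i) (Λ φ))
    (hΛb : ∀ᶠ w in 𝓝 (Λ φ), ∀ i, Λ (b w i) = 0)
    (hDb : ∀ᶠ w in 𝓝 (Λ φ), ∀ i, D (b w i) = Pi.single i 1) (hf : ContDiffAt ℝ 1 f φ)
    (hfb : ∀ x : ι → ℝ, f (φ + ∑ i, x i • b (Λ φ) i) = f φ) {U : Set E} (hU : U ∈ 𝓝 φ) :
    ∃ O ⊆ U, IsOpen O ∧ φ ∈ O ∧
      (∃ O', IsOpen O' ∧ (fun ψ => ψ - ∑ i, D ψ i • b (Λ ψ) i) '' ({ψ | D ψ = f ψ} ∩ O) =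
        (D.ker : Set E) ∩ O') ∧
      IsC1DiffeoOn (fun ψ => ψ - ∑ i, D ψ i • b (Λ ψ) i) ({ψ | D ψ = f ψ} ∩ O)
        ((fun ψ => ψ - ∑ i, D ψ i • b (Λ ψ) i) '' ({ψ | D ψ = f ψ} ∩ O)) := by
  refine exists_isC1DiffeoOn_verticalShift_equalizer
    (contDiffAt_toContinuousLinearMap_linearCombination hb)
    (hΛb.mono fun w hw => ContinuousLinearMap.ext fun x => ?_) (hDb.mono fun w hw x => ?_)
    hf hfb hU
  · simp [Fintype.linearCombination_apply, hw]
  · simp [Fintype.linearCombination_apply, hw, ← pi_eq_sum_univ']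

end Columns

section SingleColumn

variable {r : ℝ} {n : ℕ}

lemma sCLM_apply (ν : Fin n) (x : ℝ) : sCLM n ν x = Pi.single ν x := by
  ext j
  rcases eq_or_ne j ν with rfl | hj
  · simp [sCLM]
  · simp [sCLM, hj]

/-- The map `φ ↦ φ · e_ν` as a continuous linear map `C¹([-r,0],ℝ) → C¹([-r,0],ℝⁿ)`. -/
def singleCLM (ν : Fin n) : C1 r ℝ →L[ℝ] C1 r (Fin n → ℝ) :=
  (((sCLM n ν).compLeftContinuous ℝ (Icc0 r)).prodMap
    ((sCLM n ν).compLeftContinuous ℝ (Icc0 r)) ∘L (C1sub r ℝ).subtypeL).codRestrict _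
      fun φ => (singleC1 ν φ).2

lemma contDiff_singleC1 (ν : Fin n) :
    ContDiff ℝ 1 (singleC1 ν : C1 r ℝ → C1 r (Fin n → ℝ)) :=
  ContinuousLinearMap.contDiff (𝕜 := ℝ) (E := C1 r ℝ) (F := C1 r (Fin n → ℝ))
    (singleCLM (r := r) ν)

lemma evC_singleC1 (ν : Fin n) (φ : C1 r ℝ) (t : ℝ) :
    evC (singleC1 ν φ) t = Pi.single ν (evC φ t) :=
  (extFun_CMsingle ν _ t).trans (sCLM_apply ν _)

lemma dvC_singleC1 (ν : Fin n) (φ : C1 r ℝ) (t : ℝ) :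
    dvC (singleC1 ν φ) t = Pi.single ν (dvC φ t) :=
  (extFun_CMsingle ν _ t).trans (sCLM_apply ν _)

lemma map_Ymap_eq_zero {M : Type*} [AddCommMonoid M] [Module ℝ M]
    (T : C1 r (Fin n → ℝ) →ₗ[ℝ] M) {ψ : Fin n → C1 r ℝ} (hT : ∀ ν, T (singleC1 ν (ψ ν)) = 0)
    (x : Fin n → ℝ) : T (Ymap ψ x) = 0 := by
  change T (∑ ν, x ν • singleC1 ν (ψ ν)) = 0
  simp only [map_sum, map_smul, hT, smul_zero, Finset.sum_const_zero]

end SingleColumn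

namespace Setting

variable {r : ℝ} {n kk : ℕ} {G : Type*} [NormedAddCommGroup G] [NormedSpace ℝ G]
  (S : Setting r n kk G)

/-- The map `φ ↦ Lφ` as a continuous linear map on `C¹([-r,0],ℝⁿ)`. -/
def LofCLM : C1 r (Fin n → ℝ) →L[ℝ] G :=
  S.L ∘L ContinuousLinearMap.fst ℝ _ _ ∘L (C1sub r (Fin n → ℝ)).subtypeL

lemma contDiff_Lof : ContDiff ℝ 1 S.Lof :=
  ContinuousLinearMap.contDiff (𝕜 := ℝ) (E := C1 r (Fin n → ℝ)) S.LofCLM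

lemma isOpen_WupJ (J : Finset (Fin kk)) : IsOpen (S.WupJ J) := by
  refine isOpen_iff_eventually.2 fun w hw => (S.Wopen.eventually_mem hw.1).and <|
    eventually_all.2 fun k => eventually_imp_distrib_left.2 fun hk => ?_
  have hd : ContinuousAt (S.d k) w :=
    (S.d_smooth k).continuousOn.continuousAt (S.Wopen.mem_nhds hw.1)
  exact hd.eventually (lt_mem_nhds (hw.2 k hk))

lemma contDiffOn_hat : ContDiffOn ℝ 1 S.hat (S.Lof ⁻¹' S.W) := by
  refine contDiffOn_pi.2 fun k => ?_
  have hd : ContDiffOn ℝ 1 (fun φ => S.d k (S.Lof φ)) (S.Lof ⁻¹' S.W) :=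
    (S.d_smooth k).comp S.contDiff_Lof.contDiffOn fun _ hφ => hφ
  refine contDiffOn_uncurry_evC.comp (contDiffOn_id.prodMk hd.neg) fun φ hφ => ⟨mem_univ φ, ?_⟩
  exact ⟨neg_le_neg (S.d_mem k _ hφ).2, neg_nonpos.2 (S.d_mem k _ hφ).1⟩

lemma isOpen_U : IsOpen S.U :=
  S.contDiffOn_hat.continuousOn.isOpen_inter_preimage (S.Wopen.preimage S.contDiff_Lof.continuous)
    S.Vopen

lemma contDiffOn_fmap : ContDiffOn ℝ 1 S.fmap S.U :=
  S.g_smooth.comp (S.contDiffOn_hat.mono fun _ hφ => hφ.1) fun _ hφ => hφ.2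

lemma fmap_add_Ymap {φ : C1 r (Fin n → ℝ)} {ψ : Fin n → C1 r ℝ}
    (hL : ∀ ν, S.L (singleC1 ν (ψ ν)).1.1 = 0)
    (hd : ∀ ν k, evC (ψ ν) (-(S.d k (S.Lof φ))) = 0) (x : Fin n → ℝ) :
    S.fmap (φ + Ymap ψ x) = S.fmap φ := by
  have hLof : S.Lof (φ + Ymap ψ x) = S.Lof φ :=
    (map_add S.LofCLM φ _).trans (add_eq_left.2 (map_Ymap_eq_zero S.LofCLM.toLinearMap hL x))
  have hhat : S.hat (φ + Ymap ψ x) = S.hat φ := by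
    funext k
    have hev (ν) : evC (singleC1 ν (ψ ν)) (-(S.d k (S.Lof φ))) = 0 := by
      rw [evC_singleC1, hd, Pi.single_zero]
    rw [hat, hLof]
    exact (map_add (evCLM _) φ _).trans
      (add_eq_left.2 (map_Ymap_eq_zero (evCLM _).toLinearMap hev x))
  rw [fmap, hhat, fmap]

lemma evC_neg_d_eq_zero {J : Finset (Fin kk)} {w : G} (hw : w ∈ S.WJ J) {η : C1 r ℝ}
    (h0 : evC η 0 = 0) (hvan : ∀ k ∉ J, ∀ t ∈ Icc (-r) (-(S.d k w)), evC η t = 0) (k : Fin kk) :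
    evC η (-(S.d k w)) = 0 := by
  by_cases hk : k ∈ J
  · rwa [hw.2.1 k hk, neg_zero]
  · exact hvan k hk _ ⟨neg_le_neg (S.d_mem k w hw.1).2, le_rfl⟩

end Setting

theorem statement13_general {r : ℝ} {n kk : ℕ} {G : Type*} [NormedAddCommGroup G]
    [NormedSpace ℝ G] (S : Setting r n kk G) {Ω : Set G} (hΩ : IsOpen Ω) (y : Fin n → G → C1 r ℝ)
    (hy_smooth : ∀ ν, ContDiffOn ℝ 1 (y ν) Ω)
    (hy1 : ∀ ν, ∀ w ∈ Ω, dvC (y ν w) 0 = 1)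
    (hyL : ∀ ν, ∀ w ∈ Ω, S.L (singleC1 ν (y ν w)).1.1 = 0)
    {φ : C1 r (Fin n → ℝ)} (hφ : φ ∈ S.Xf) (hφΩ : S.Lof φ ∈ Ω)
    (hyd : ∀ ν k, evC (y ν (S.Lof φ)) (-(S.d k (S.Lof φ))) = 0) :
    ∃ N O : Set (C1 r (Fin n → ℝ)), IsOpen O ∧ N = S.Xf ∩ O ∧ φ ∈ N ∧
      N ⊆ {ψ | ψ ∈ S.U ∧ S.Lof ψ ∈ Ω} ∩ S.Xf ∧
      (∃ O', IsOpen O' ∧ S.RJmap y '' N = (X0sub r n : Set (C1 r (Fin n → ℝ))) ∩ O') ∧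
      IsC1DiffeoOn (S.RJmap y) N (S.RJmap y '' N) := by
  have hΩφ := hΩ.mem_nhds hφΩ
  obtain ⟨O, hO, hOopen, hφO, himage, hdiffeo⟩ :=
    exists_isC1DiffeoOn_sub_sum_smul_equalizer (E := C1 r (Fin n → ℝ)) (Λ := S.LofCLM)
      (D := dvCLM 0) (b := fun w ν => singleC1 ν (y ν w))
      (fun ν => (contDiff_singleC1 ν).contDiffAt.comp _ ((hy_smooth ν).contDiffAt hΩφ))
      (eventually_of_mem hΩφ fun w hw ν => hyL ν w hw)
      (eventually_of_mem hΩφ fun w hw ν => (dvC_singleC1 ν _ 0).trans (by rw [hy1 ν w hw]))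
      (S.contDiffOn_fmap.contDiffAt (S.isOpen_U.mem_nhds hφ.1))
      (S.fmap_add_Ymap (fun ν => hyL ν _ hφΩ) hyd)
      (inter_mem (S.isOpen_U.mem_nhds hφ.1) (S.contDiff_Lof.continuous.continuousAt hΩφ))
  have hXf : {ψ | dvCLM 0 ψ = S.fmap ψ} ∩ O = S.Xf ∩ O := by
    ext ψ
    exact and_congr_left fun hψ => (and_iff_right (hO hψ).1).symm
  rw [hXf] at himage hdiffeo
  exact ⟨_, O, hOopen, rfl, ⟨hφ, hφO⟩, fun ψ hψ => ⟨hO hψ.2, hψ.1⟩, himage, hdiffeo⟩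

/-- Corollary 4.5. -/
theorem statement13 (hr : 0 < r) (S : Setting r n kk F)
    (J : Finset (Fin kk)) (hJ : J ≠ Finset.univ) (hUJ : (S.UJ J).Nonempty)
    (y : Fin n → F → C1 r ℝ)
    (hy_smooth : ∀ ν, ContDiffOn ℝ 1 (y ν) (S.WupJ J))
    (hy0 : ∀ ν, ∀ w ∈ S.WupJ J, evC (y ν w) 0 = 0)
    (hy1 : ∀ ν, ∀ w ∈ S.WupJ J, dvC (y ν w) 0 = 1)
    (hyL : ∀ ν, ∀ w ∈ S.WupJ J, S.L (singleC1 ν (y ν w)).1.1 = 0)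
    (hyvan : ∀ ν, ∀ w ∈ S.WupJ J, ∀ k ∉ J, ∀ t ∈ Set.Icc (-r) (-(S.d k w)),
      evC (y ν w) t = 0) :
    ∀ φ ∈ S.XfJ J,
      ∃ N O : Set (C1 r (Fin n → ℝ)), IsOpen O ∧ N = S.Xf ∩ O ∧ φ ∈ N ∧
        N ⊆ S.UupJ J ∩ S.Xf ∧
        (∃ O', IsOpen O' ∧ S.RJmap y '' N = (X0sub r n : Set (C1 r (Fin n → ℝ))) ∩ O') ∧
        IsC1DiffeoOn (S.RJmap y) N (S.RJmap y '' N) :=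
  fun φ hφ =>
    have hW : S.Lof φ ∈ S.WupJ J := ⟨hφ.2.2.1, hφ.2.2.2.2⟩
    statement13_general S (S.isOpen_WupJ J) y hy_smooth hy1 hyL hφ.1 hW fun ν k =>
      S.evC_neg_d_eq_zero hφ.2.2 (hy0 ν _ hW) (hyvan ν _ hW) k
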